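/- Let A be a Hopf algebra over a field k with bijective antipode, let P ∈ A be a right group-like projection, let N_P be the associated left coideal subalgebra and V_P ⊆ N_P the smallest left coideal containing P. Then V_P = N_P if and only if N_P is quasi-Frobenius, i.e. N_P is injective as a left module over itself. -/

import Mathlib

open scoped TensorProduct

noncomputable section

variable (k : Type*) [Field k] {A : Type*} [Ring A] [HopfAlgebra k A]

/-- `P` is a right group-like projection: a nonzero idempotent with
`Δ(P)(1 ⊗ P) = P ⊗ P = (1 ⊗ P)Δ(P)`. -/
def IsRightGroupLikeProjection (P : A) : Prop :=
  P ≠ 0 ∧ P * P = P ∧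
    Coalgebra.comul (R := k) P * ((1 : A) ⊗ₜ[k] P) = P ⊗ₜ[k] P ∧
    ((1 : A) ⊗ₜ[k] P) * Coalgebra.comul (R := k) P = P ⊗ₜ[k] P

/-- `P` is a left group-like projection: a nonzero idempotent with
`Δ(P)(P ⊗ 1) = P ⊗ P = (P ⊗ 1)Δ(P)`. -/
def IsLeftGroupLikeProjection (P : A) : Prop :=
  P ≠ 0 ∧ P * P = P ∧
    Coalgebra.comul (R := k) P * (P ⊗ₜ[k] (1 : A)) = P ⊗ₜ[k] P ∧
    (P ⊗ₜ[k] (1 : A)) * Coalgebra.comul (R := k) P = P ⊗ₜ[k] P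

/-- A two-sided group-like projection. -/
def IsTwoSidedGroupLikeProjection (P : A) : Prop :=
  IsRightGroupLikeProjection k P ∧ IsLeftGroupLikeProjection k P

/-- `N_P^l = {x : (1 ⊗ P)Δ(x) = x ⊗ P}`. -/
def NPlSet (P : A) : Set A :=
  {x : A | ((1 : A) ⊗ₜ[k] P) * Coalgebra.comul (R := k) x = x ⊗ₜ[k] P}

/-- `N_P^r = {x : Δ(x)(1 ⊗ P) = x ⊗ P}`. -/
def NPrSet (P : A) : Set A :=
  {x : A | Coalgebra.comul (R := k) x * ((1 : A) ⊗ₜ[k] P) = x ⊗ₜ[k] P}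

/-- `N_P = N_P^l ∩ N_P^r`. -/
def NPSet (P : A) : Set A := NPlSet k P ∩ NPrSet k P

/-- `V_P = {(μ ⊗ id)(Δ(P)) : μ ∈ A*}`, the smallest left coideal containing `P`. -/
def VPSet (P : A) : Set A :=
  {x : A | ∃ μ : A →ₗ[k] k,
    x = TensorProduct.lid k A ((TensorProduct.map μ LinearMap.id) (Coalgebra.comul (R := k) P))}

/-- A submodule `N ⊆ A` is a left coideal if `Δ(N) ⊆ A ⊗ N`. -/
def IsLeftCoideal (N : Submodule k A) : Prop :=
  ∀ x ∈ N, Coalgebra.comul (R := k) x ∈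
    LinearMap.range (TensorProduct.map (LinearMap.id : A →ₗ[k] A) N.subtype)

/-- A subalgebra `N ⊆ A` is a left coideal subalgebra if `Δ(N) ⊆ A ⊗ N`. -/
def IsLeftCoidealSubalgebra (N : Subalgebra k A) : Prop :=
  IsLeftCoideal k (Subalgebra.toSubmodule N)

/-- Multiplying the second leg of `Δ(P)` by `x` on the left is multiplying the first leg by `S(x)`. -/
theorem one_tmul_mul_comul_of_mem_NPrSet {P x : A} (hx : x ∈ NPrSet k P) :
    ((1 : A) ⊗ₜ[k] x) * Coalgebra.comul (R := k) P =
      (HopfAlgebra.antipode k x ⊗ₜ[k] (1 : A)) * Coalgebra.comul (R := k) P := by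
  let Φ : A ⊗[k] (A ⊗[k] A) →ₗ[k] A ⊗[k] A :=
    TensorProduct.lift ((LinearMap.mul k (A ⊗[k] A)) ∘ₗ
      (TensorProduct.mk k A A).flip 1 ∘ₗ HopfAlgebra.antipode k)
  have hΦ (a : A) (t : A ⊗[k] A) :
      Φ (a ⊗ₜ t) = (HopfAlgebra.antipode k a ⊗ₜ[k] (1 : A)) * t := by simp [Φ]
  have hassoc : Φ ((Coalgebra.comul (R := k)).lTensor A (Coalgebra.comul (R := k) x)) =
      (1 : A) ⊗ₜ[k] x := by
    have h (u : A ⊗[k] A) (c : A) : Φ (TensorProduct.assoc k A A A (u ⊗ₜ c)) =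
        LinearMap.mul' k A ((HopfAlgebra.antipode k).rTensor A u) ⊗ₜ[k] c := by
      induction u with
      | zero => simp
      | add u v hu hv => simp [TensorProduct.add_tmul, hu, hv]
      | tmul a b => simp [hΦ]
    have h' (t : A ⊗[k] A) : Φ (TensorProduct.assoc k A A A
        ((Coalgebra.comul (R := k)).rTensor A t)) =
        (Algebra.linearMap k A).rTensor A ((Coalgebra.counit (R := k)).rTensor A t) := by
      induction t with
      | zero => simp
      | add u v hu hv => simp only [map_add, hu, hv]
      | tmul a b => simp [h]
    rw [← Coalgebra.coassoc_apply, h', Coalgebra.rTensor_counit_comul]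
    simp
  have hmul (t : A ⊗[k] A) :
      Φ ((Coalgebra.comul (R := k)).lTensor A (t * ((1 : A) ⊗ₜ[k] P))) =
        Φ ((Coalgebra.comul (R := k)).lTensor A t) * Coalgebra.comul (R := k) P := by
    induction t with
    | zero => simp
    | add u v hu hv => simp only [map_add, add_mul, hu, hv]
    | tmul a b => simp [hΦ, mul_assoc]
  have hx' : Coalgebra.comul (R := k) x * ((1 : A) ⊗ₜ[k] P) = x ⊗ₜ[k] P := hx
  rw [← hassoc, ← hmul, hx']
  simp [hΦ]

/-- Multiplying the second leg of `(S ⊗ id)Δ(P)` by `x` on the right is multiplying the first leg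
by `x` on the left. -/
theorem antipode_rTensor_comul_mul_one_tmul_of_mem_NPlSet {P x : A} (hx : x ∈ NPlSet k P) :
    (HopfAlgebra.antipode k).rTensor A (Coalgebra.comul (R := k) P) * ((1 : A) ⊗ₜ[k] x) =
      (x ⊗ₜ[k] (1 : A)) *
        (HopfAlgebra.antipode k).rTensor A (Coalgebra.comul (R := k) P) := by
  let Ψ : A ⊗[k] (A ⊗[k] A) →ₗ[k] A ⊗[k] A :=
    TensorProduct.lift ((LinearMap.mul k (A ⊗[k] A)).compl₂ ((HopfAlgebra.antipode k).rTensor A) ∘ₗ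
      (TensorProduct.mk k A A).flip 1)
  have hΨ (a : A) (t : A ⊗[k] A) :
      Ψ (a ⊗ₜ t) = (a ⊗ₜ[k] (1 : A)) * (HopfAlgebra.antipode k).rTensor A t := by simp [Ψ]
  have hassoc (s : A ⊗[k] A) :
      Ψ (((1 : A) ⊗ₜ[k] s) *
        (Coalgebra.comul (R := k)).lTensor A (Coalgebra.comul (R := k) x)) =
      (HopfAlgebra.antipode k).rTensor A s * ((1 : A) ⊗ₜ[k] x) := by
    induction s with
    | zero => simp
    | add u v hu hv => simp only [TensorProduct.tmul_add, map_add, add_mul, hu, hv]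
    | tmul p q =>
      have h (u : A ⊗[k] A) (c : A) :
          Ψ (((1 : A) ⊗ₜ[k] (p ⊗ₜ[k] q)) * TensorProduct.assoc k A A A (u ⊗ₜ c)) =
          (LinearMap.mul' k A ((HopfAlgebra.antipode k).lTensor A u) *
            HopfAlgebra.antipode k p) ⊗ₜ[k] (q * c) := by
        induction u with
        | zero => simp
        | add u v hu hv => simp [TensorProduct.add_tmul, add_mul, mul_add, hu, hv]
        | tmul a b => simp [hΨ, HopfAlgebra.antipode_mul_antidistrib, mul_assoc]
      have h' (t : A ⊗[k] A) : Ψ (((1 : A) ⊗ₜ[k] (p ⊗ₜ[k] q)) * TensorProduct.assoc k A A A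
          ((Coalgebra.comul (R := k)).rTensor A t)) =
          TensorProduct.map (LinearMap.mulRight k (HopfAlgebra.antipode k p) ∘ₗ
            Algebra.linearMap k A) (LinearMap.mulLeft k q)
            ((Coalgebra.counit (R := k)).rTensor A t) := by
        induction t with
        | zero => simp
        | add u v hu hv => simp only [map_add, mul_add, hu, hv]
        | tmul a b => simp [h]
      rw [← Coalgebra.coassoc_apply, h', Coalgebra.rTensor_counit_comul]
      simp
  have hmul (t : A ⊗[k] A) :
      (Coalgebra.comul (R := k)).lTensor A (((1 : A) ⊗ₜ[k] P) * t) =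
        ((1 : A) ⊗ₜ[k] Coalgebra.comul (R := k) P) *
          (Coalgebra.comul (R := k)).lTensor A t := by
    induction t with
    | zero => simp
    | add u v hu hv => simp only [map_add, mul_add, hu, hv]
    | tmul a b => simp
  have hx' : ((1 : A) ⊗ₜ[k] P) * Coalgebra.comul (R := k) x = x ⊗ₜ[k] P := hx
  rw [← hassoc, ← hmul, hx']
  simp [hΨ]

/-- The second legs of `Δ(P)` lie in `N_P`. -/
theorem VPSet_subset_NPSet {P : A} (hP : IsRightGroupLikeProjection k P) :
    VPSet k P ⊆ NPSet k P := by
  obtain ⟨-, -, hr, hl⟩ := hP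
  rintro _ ⟨μ, rfl⟩
  let Θ : A ⊗[k] (A ⊗[k] A) →ₗ[k] A ⊗[k] A :=
    (TensorProduct.lid k (A ⊗[k] A)).toLinearMap ∘ₗ TensorProduct.map μ LinearMap.id
  have hΘ (a : A) (t : A ⊗[k] A) : Θ (a ⊗ₜ t) = μ a • t := by simp [Θ]
  have hcomul : Coalgebra.comul (R := k)
      (TensorProduct.lid k A (TensorProduct.map μ LinearMap.id (Coalgebra.comul (R := k) P))) =
      Θ (TensorProduct.assoc k A A A ((Coalgebra.comul (R := k)).rTensor A
        (Coalgebra.comul (R := k) P))) := by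
    rw [Coalgebra.coassoc_apply]
    induction Coalgebra.comul (R := k) P with
    | zero => simp
    | add u v hu hv => simp only [map_add, hu, hv]
    | tmul a b => simp [hΘ]
  have hslice (u : A ⊗[k] A) (c : A) : Θ (TensorProduct.assoc k A A A (u ⊗ₜ c)) =
      TensorProduct.lid k A (TensorProduct.map μ LinearMap.id u) ⊗ₜ[k] c := by
    induction u with
    | zero => simp
    | add u v hu hv => simp only [map_add, TensorProduct.add_tmul, hu, hv]
    | tmul a b => simp [hΘ, TensorProduct.smul_tmul']
  constructor
  · have h (t : A ⊗[k] A) : ((1 : A) ⊗ₜ[k] P) * Θ (TensorProduct.assoc k A A A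
        ((Coalgebra.comul (R := k)).rTensor A t)) =
        Θ (TensorProduct.assoc k A A A
          ((Coalgebra.comul (R := k)).rTensor A (((1 : A) ⊗ₜ[k] P) * t))) := by
      induction t with
      | zero => simp
      | add u v hu hv => simp only [map_add, mul_add, hu, hv]
      | tmul a b => simp [hslice]
    change _ * _ = _
    rw [hcomul, h, hl]
    simp [hslice]
  · have h (t : A ⊗[k] A) : Θ (TensorProduct.assoc k A A A
        ((Coalgebra.comul (R := k)).rTensor A t)) * ((1 : A) ⊗ₜ[k] P) =
        Θ (TensorProduct.assoc k A A A
          ((Coalgebra.comul (R := k)).rTensor A (t * ((1 : A) ⊗ₜ[k] P)))) := by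
      induction t with
      | zero => simp
      | add u v hu hv => simp only [map_add, add_mul, hu, hv]
      | tmul a b => simp [hslice]
    change _ * _ = _
    rw [hcomul, h, hr]
    simp [hslice]

theorem counit_eq_one_of_isRightGroupLikeProjection {P : A}
    (hP : IsRightGroupLikeProjection k P) : Coalgebra.counit (R := k) P = 1 := by
  obtain ⟨h0, hi, hr, -⟩ := hP
  have h (t : A ⊗[k] A) :
      TensorProduct.lid k A ((Coalgebra.counit (R := k)).rTensor A (t * ((1 : A) ⊗ₜ[k] P))) =
      TensorProduct.lid k A ((Coalgebra.counit (R := k)).rTensor A t) * P := by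
    induction t with
    | zero => simp
    | add u v hu hv => simp only [map_add, add_mul, hu, hv]
    | tmul a b => simp
  have hε := h (Coalgebra.comul (R := k) P)
  rw [hr, Coalgebra.rTensor_counit_comul] at hε
  simp only [LinearMap.rTensor_tmul, TensorProduct.lid_tmul, one_smul, hi] at hε
  have : (Coalgebra.counit (R := k) P - 1) • P = 0 := by rw [sub_smul, hε, one_smul, sub_self]
  exact sub_eq_zero.mp ((smul_eq_zero.mp this).resolve_right h0)

/-- `Δ(P)` is a finite sum of tensors whose second legs lie in `V_P`. -/
theorem exists_finset_comul_eq_sum_mem_VPSet (P : A) :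
    ∃ (s : Finset A) (b : A → A), (∀ a, b a ∈ VPSet k P) ∧
      Coalgebra.comul (R := k) P = ∑ a ∈ s, a ⊗ₜ[k] b a := by
  classical
  let B := Module.Basis.ofVectorSpace k A
  let c := TensorProduct.equivFinsuppOfBasisLeft (N := A) B (Coalgebra.comul (R := k) P)
  have hc (i) : c i ∈ VPSet k P := ⟨B.coord i, TensorProduct.equivFinsuppOfBasisLeft_apply B _ i⟩
  refine ⟨c.support.map ⟨B, B.injective⟩, fun a => if h : ∃ i, B i = a then c h.choose else 0,
    fun a => ?_, ?_⟩
  · dsimp only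
    split_ifs with h
    · exact hc _
    · exact ⟨0, by simp⟩
  · rw [Finset.sum_map]
    have hi (i) (h : ∃ j, B j = B i) : h.choose = i := B.injective h.choose_spec
    simp only [Function.Embedding.coeFn_mk, exists_apply_eq_apply, dite_true, hi]
    have := (TensorProduct.equivFinsuppOfBasisLeft (N := A) B).symm_apply_apply
      (Coalgebra.comul (R := k) P)
    rw [TensorProduct.equivFinsuppOfBasisLeft_symm_apply] at this
    exact this.symm

/-- `V_P` as a subspace of `A`. -/
def VPSubmodule (P : A) : Submodule k A where
  carrier := VPSet k P
  zero_mem' := ⟨0, by simp⟩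
  add_mem' := by
    rintro _ _ ⟨μ, rfl⟩ ⟨ν, rfl⟩
    exact ⟨μ + ν, by simp [TensorProduct.map_add_left]⟩
  smul_mem' := by
    rintro c _ ⟨μ, rfl⟩
    exact ⟨c • μ, by simp [TensorProduct.map_smul_left]⟩

/-- `V_P` is stable under right multiplication by `N_P`. -/
theorem mul_mem_VPSet
    (hS : Function.Bijective (HopfAlgebra.antipode (R := k) : A →ₗ[k] A))
    {P v x : A} (hv : v ∈ VPSet k P) (hx : x ∈ NPlSet k P) : v * x ∈ VPSet k P := by
  obtain ⟨μ, rfl⟩ := hv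
  let T := LinearEquiv.ofBijective (HopfAlgebra.antipode k : A →ₗ[k] A) hS
  have hT (a : A) : T.symm (HopfAlgebra.antipode k a) = a := T.symm_apply_apply a
  let ν : A →ₗ[k] k := μ ∘ₗ T.symm.toLinearMap
  refine ⟨ν ∘ₗ LinearMap.mulLeft k x ∘ₗ HopfAlgebra.antipode k, ?_⟩
  have h := congrArg (fun t => TensorProduct.lid k A (TensorProduct.map ν LinearMap.id t))
    (antipode_rTensor_comul_mul_one_tmul_of_mem_NPlSet k hx)
  have hl (t : A ⊗[k] A) : TensorProduct.lid k A (TensorProduct.map ν LinearMap.id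
      ((HopfAlgebra.antipode k).rTensor A t * ((1 : A) ⊗ₜ[k] x))) =
      TensorProduct.lid k A (TensorProduct.map μ LinearMap.id t) * x := by
    induction t with
    | zero => simp
    | add u v hu hv => simp only [map_add, add_mul, hu, hv]
    | tmul a b => simp [ν, hT]
  have hr (t : A ⊗[k] A) : TensorProduct.lid k A (TensorProduct.map ν LinearMap.id
      ((x ⊗ₜ[k] (1 : A)) * (HopfAlgebra.antipode k).rTensor A t)) =
      TensorProduct.lid k A (TensorProduct.map (ν ∘ₗ LinearMap.mulLeft k x ∘ₗ
        HopfAlgebra.antipode k) LinearMap.id t) := by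
    induction t with
    | zero => simp
    | add u v hu hv => simp only [map_add, mul_add, hu, hv]
    | tmul a b => simp
  rw [hl, hr] at h
  exact h

/-- An element of `N_P` annihilating the second leg of `Δ(P)` from the left vanishes. -/
theorem eq_zero_of_one_tmul_mul_comul_eq_zero
    (hS : Function.Injective (HopfAlgebra.antipode (R := k) : A →ₗ[k] A))
    {P x : A} (hP : IsRightGroupLikeProjection k P) (hx : x ∈ NPrSet k P)
    (h : ((1 : A) ⊗ₜ[k] x) * Coalgebra.comul (R := k) P = 0) : x = 0 := by
  rw [one_tmul_mul_comul_of_mem_NPrSet k hx] at h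
  have hm (a : A) (t : A ⊗[k] A) :
      LinearMap.mul' k A ((HopfAlgebra.antipode k).lTensor A ((a ⊗ₜ[k] (1 : A)) * t)) =
      a * LinearMap.mul' k A ((HopfAlgebra.antipode k).lTensor A t) := by
    induction t with
    | zero => simp
    | add u v hu hv => simp only [map_add, mul_add, hu, hv]
    | tmul b c => simp [mul_assoc]
  have h' := hm (HopfAlgebra.antipode k x) (Coalgebra.comul (R := k) P)
  rw [h, HopfAlgebra.mul_antipode_lTensor_comul_apply,
    counit_eq_one_of_isRightGroupLikeProjection k hP] at h'
  apply hS
  simpa using h'.symm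

/-- The averaging of a linear map `F` by `P`: `y ↦ S(P₁) F(P₂ y)`. -/
def averageByProjection (P : A) (F : A →ₗ[k] A) (y : A) : A :=
  LinearMap.mul' k A (TensorProduct.map (HopfAlgebra.antipode k) (F ∘ₗ LinearMap.mulRight k y)
    (Coalgebra.comul (R := k) P))

theorem averageByProjection_add (P : A) (F : A →ₗ[k] A) (x y : A) :
    averageByProjection k P F (x + y) =
      averageByProjection k P F x + averageByProjection k P F y := by
  have : LinearMap.mulRight k (x + y) = LinearMap.mulRight k x + LinearMap.mulRight k y := by
    ext; simp [mul_add]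
  simp [averageByProjection, this, LinearMap.comp_add, TensorProduct.map_add_right]

theorem averageByProjection_mul {P x : A} (F : A →ₗ[k] A) (hx : x ∈ NPlSet k P) (y : A) :
    averageByProjection k P F (x * y) = x * averageByProjection k P F y := by
  have h := congrArg (fun t => LinearMap.mul' k A
    ((F ∘ₗ LinearMap.mulRight k y).lTensor A t))
    (antipode_rTensor_comul_mul_one_tmul_of_mem_NPlSet k hx)
  have hl (t : A ⊗[k] A) : LinearMap.mul' k A ((F ∘ₗ LinearMap.mulRight k y).lTensor A
      ((HopfAlgebra.antipode k).rTensor A t * ((1 : A) ⊗ₜ[k] x))) =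
      LinearMap.mul' k A (TensorProduct.map (HopfAlgebra.antipode k)
        (F ∘ₗ LinearMap.mulRight k (x * y)) t) := by
    induction t with
    | zero => simp
    | add u v hu hv => simp only [map_add, add_mul, hu, hv]
    | tmul a b => simp [mul_assoc]
  have hr (t : A ⊗[k] A) : LinearMap.mul' k A ((F ∘ₗ LinearMap.mulRight k y).lTensor A
      ((x ⊗ₜ[k] (1 : A)) * (HopfAlgebra.antipode k).rTensor A t)) =
      x * LinearMap.mul' k A (TensorProduct.map (HopfAlgebra.antipode k)
        (F ∘ₗ LinearMap.mulRight k y) t) := by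
    induction t with
    | zero => simp
    | add u v hu hv => simp only [map_add, mul_add, hu, hv]
    | tmul a b => simp [mul_assoc]
  rw [hl, hr] at h
  exact h

/-- Averaging does not change the value at `y` of a map that is linear at `y` over `V_P`. -/
theorem averageByProjection_eq {P : A} (hP : IsRightGroupLikeProjection k P) (F : A →ₗ[k] A)
    (y : A) (hF : ∀ v ∈ VPSet k P, F (v * y) = v * F y) :
    averageByProjection k P F y = F y := by
  obtain ⟨s, b, hb, hs⟩ := exists_finset_comul_eq_sum_mem_VPSet k P
  have h := HopfAlgebra.mul_antipode_rTensor_comul_apply (R := k) P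
  rw [counit_eq_one_of_isRightGroupLikeProjection k hP, hs] at h
  simp only [map_sum, LinearMap.rTensor_tmul, LinearMap.mul'_apply, map_one] at h
  simp only [averageByProjection, hs, map_sum, TensorProduct.map_tmul, LinearMap.mul'_apply,
    LinearMap.comp_apply, LinearMap.mulRight_apply, hF _ (hb _), ← mul_assoc, ← Finset.sum_mul, h,
    one_mul]

/-- The linear map `a ↦ μ(S(a) P₁) P₂` from `A` to `V_P`. -/
def coidealRetraction (P : A) (μ : A →ₗ[k] k) (a : A) : A :=
  TensorProduct.lid k A (TensorProduct.map (μ ∘ₗ LinearMap.mulLeft k (HopfAlgebra.antipode k a))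
    LinearMap.id (Coalgebra.comul (R := k) P))

theorem coidealRetraction_mem (P : A) (μ : A →ₗ[k] k) (a : A) :
    coidealRetraction k P μ a ∈ VPSet k P := ⟨_, rfl⟩

theorem coidealRetraction_add (P : A) (μ : A →ₗ[k] k) (a b : A) :
    coidealRetraction k P μ (a + b) = coidealRetraction k P μ a + coidealRetraction k P μ b := by
  have (u v : A) : LinearMap.mulLeft k (u + v) = LinearMap.mulLeft k u + LinearMap.mulLeft k v := by
    ext; simp [add_mul]
  simp [coidealRetraction, this, LinearMap.comp_add, TensorProduct.map_add_left]

theorem coidealRetraction_mul {P x : A} (μ : A →ₗ[k] k) (hx : x ∈ NPrSet k P) (a : A) :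
    coidealRetraction k P μ (x * a) = x * coidealRetraction k P μ a := by
  have h := congrArg (fun t => TensorProduct.lid k A (TensorProduct.map
    (μ ∘ₗ LinearMap.mulLeft k (HopfAlgebra.antipode k a)) LinearMap.id t))
    (one_tmul_mul_comul_of_mem_NPrSet k hx)
  have hl (t : A ⊗[k] A) : TensorProduct.lid k A (TensorProduct.map
      (μ ∘ₗ LinearMap.mulLeft k (HopfAlgebra.antipode k a)) LinearMap.id
      (((1 : A) ⊗ₜ[k] x) * t)) =
      x * TensorProduct.lid k A (TensorProduct.map
        (μ ∘ₗ LinearMap.mulLeft k (HopfAlgebra.antipode k a)) LinearMap.id t) := by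
    induction t with
    | zero => simp
    | add u v hu hv => simp only [map_add, mul_add, hu, hv]
    | tmul a b => simp
  have hr (t : A ⊗[k] A) : TensorProduct.lid k A (TensorProduct.map
      (μ ∘ₗ LinearMap.mulLeft k (HopfAlgebra.antipode k a)) LinearMap.id
      ((HopfAlgebra.antipode k x ⊗ₜ[k] (1 : A)) * t)) =
      TensorProduct.lid k A (TensorProduct.map
        (μ ∘ₗ LinearMap.mulLeft k (HopfAlgebra.antipode k (x * a))) LinearMap.id t) := by
    induction t with
    | zero => simp
    | add u v hu hv => simp only [map_add, mul_add, hu, hv]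
    | tmul a b => simp [HopfAlgebra.antipode_mul_antidistrib]
  rw [hl, hr] at h
  exact h.symm

theorem coidealRetraction_eq {P x : A} (μ : A →ₗ[k] k) (hx : x ∈ NPrSet k P)
    (hμ : 1 = TensorProduct.lid k A
      (TensorProduct.map μ LinearMap.id (Coalgebra.comul (R := k) P))) :
    coidealRetraction k P μ x = x := by
  have h1 : coidealRetraction k P μ 1 = 1 := by
    have : μ ∘ₗ LinearMap.mulLeft k (1 : A) = μ := by ext; simp
    rw [coidealRetraction, HopfAlgebra.antipode_one, this, ← hμ]
  simpa [h1] using coidealRetraction_mul k μ hx 1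

theorem injective_of_one_mem_VPSet {P : A} (hP : IsRightGroupLikeProjection k P)
    (N : Subalgebra k A) (hN : (N : Set A) = NPSet k P) (h1 : 1 ∈ VPSet k P) :
    Module.Injective N N := by
  have hmem {x : A} : x ∈ N ↔ x ∈ NPSet k P := by rw [← hN]; rfl
  obtain ⟨μ, hμ⟩ := h1
  refine Module.Baer.injective fun I g => ?_
  let L : Submodule k A := (I.restrictScalars k).map N.val.toLinearMap
  let e : I.restrictScalars k ≃ₗ[k] L :=
    Submodule.equivMapOfInjective N.val.toLinearMap Subtype.val_injective _
  obtain ⟨F, hF⟩ := LinearMap.exists_extend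
    (N.val.toLinearMap ∘ₗ g.restrictScalars k ∘ₗ e.symm.toLinearMap)
  have hFg (y : N) (hy : y ∈ I) : F y = g ⟨y, hy⟩ := by
    have h : F y = (g (e.symm (e ⟨y, hy⟩)) : A) := LinearMap.congr_fun hF (e ⟨y, hy⟩)
    rw [h, e.symm_apply_apply]
    rfl
  refine ⟨{ toFun := fun y => ⟨coidealRetraction k P μ (averageByProjection k P F y),
              hmem.2 (VPSet_subset_NPSet k hP (coidealRetraction_mem k P μ _))⟩
            map_add' := fun x y => Subtype.ext ?_
            map_smul' := fun x y => Subtype.ext ?_ }, fun y hy => Subtype.ext ?_⟩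
  · simp [averageByProjection_add, coidealRetraction_add]
  · simp [averageByProjection_mul k F (hmem.1 x.2).1, coidealRetraction_mul k μ (hmem.1 x.2).2]
  · change coidealRetraction k P μ (averageByProjection k P F y) = _
    rw [averageByProjection_eq k hP F y, hFg y hy]
    · exact coidealRetraction_eq k μ (hmem.1 (g ⟨y, hy⟩).2).2 hμ
    · intro v hv
      have hvN : v ∈ N := hmem.2 (VPSet_subset_NPSet k hP hv)
      have := hFg (⟨v, hvN⟩ * y) (I.mul_mem_left _ hy)
      rw [hFg y hy]
      refine this.trans ?_
      exact congrArg Subtype.val (g.map_smul ⟨v, hvN⟩ ⟨y, hy⟩)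

theorem one_mem_VPSet_of_injective
    (hS : Function.Bijective (HopfAlgebra.antipode (R := k) : A →ₗ[k] A))
    {P : A} (hP : IsRightGroupLikeProjection k P)
    (N : Subalgebra k A) (hN : (N : Set A) = NPSet k P) (hinj : Module.Injective N N) :
    1 ∈ VPSet k P := by
  classical
  have hmem {x : A} : x ∈ N ↔ x ∈ NPSet k P := by rw [← hN]; rfl
  obtain ⟨s, b, hb, hs⟩ := exists_finset_comul_eq_sum_mem_VPSet k P
  let c (i : s) : N := ⟨b i, hmem.2 (VPSet_subset_NPSet k hP (hb i))⟩
  let f : N →ₗ[N] (s → N) := LinearMap.pi fun i => LinearMap.toSpanSingleton N N (c i)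
  have hf : Function.Injective f := by
    rw [← LinearMap.ker_eq_bot, LinearMap.ker_eq_bot']
    intro x hx
    have hx' (a : A) (ha : a ∈ s) : (x : A) * b a = 0 :=
      congrArg Subtype.val (congrFun hx ⟨a, ha⟩)
    refine Subtype.ext (eq_zero_of_one_tmul_mul_comul_eq_zero k hS.1 hP (hmem.1 x.2).2 ?_)
    rw [hs, Finset.mul_sum]
    exact Finset.sum_eq_zero fun a ha => by simp [hx' a ha]
  obtain ⟨h, hh⟩ := hinj.out f hf LinearMap.id
  have h1 : (1 : N) = ∑ i, c i * h (Pi.single i 1) := by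
    have hfc : f 1 = ∑ i, c i • (Pi.single i 1 : s → N) := by
      ext j
      simp [f, Finset.sum_apply, Pi.single_apply]
    have := hh 1
    rw [hfc, map_sum] at this
    simpa using this.symm
  have h1' : (1 : A) = ∑ i : s, b i * (h (Pi.single i 1) : A) := by
    simpa [c] using congrArg Subtype.val h1
  rw [h1']
  exact Submodule.sum_mem (VPSubmodule k P) fun i _ =>
    mul_mem_VPSet k hS (hb i) (hmem.1 (h (Pi.single i 1)).2).1

/-- Theorem: `V_P = N_P` if and only if `N_P` is quasi-Frobenius, i.e. injective
as a left module over itself. -/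
theorem statement4
    (hS : Function.Bijective (HopfAlgebra.antipode (R := k) : A →ₗ[k] A))
    (P : A) (hP : IsRightGroupLikeProjection k P)
    (N : Subalgebra k A) (hN : (N : Set A) = NPSet k P) :
    VPSet k P = NPSet k P ↔ Module.Injective N N := by
  constructor
  · intro h
    refine injective_of_one_mem_VPSet k hP N hN ?_
    rw [h, ← hN]
    exact N.one_mem
  · intro h
    refine (VPSet_subset_NPSet k hP).antisymm fun x hx => ?_
    simpa using mul_mem_VPSet k hS (one_mem_VPSet_of_injective k hS hP N hN h) hx.1
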